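/- arXiv:math-ph/0002050 — 3 statements merged into one kernel-verified Lean document; each statement's English description precedes it below -/
import Mathlib

section
/- Let ρ and σ be density matrices on a finite-dimensional complex Hilbert space (i.e., positive semidefinite Hermitian matrices of trace 1), and assume ρ and σ are positive definite. For every λ ∈ (0,1), the von Neumann entropy satisfies S(λρ + (1−λ)σ) ≤ λ S(ρ) + (1−λ) S(σ) + λ log(1/λ) + (1−λ) log(1/(1−λ)). -/
/-!
Write `ω = l • ρ + (1 - l) • σ`. Since `ω ≥ l • ρ` in the Loewner order and the logarithm is operator
monotone (`CFC.log_le_log`), `log ω ≥ (log l) • 1 + log ρ`. Pairing with `ρ ≥ 0` under the trace gives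
`Tr[ρ log ω] ≥ log l - S(ρ)`, and likewise `Tr[σ log ω] ≥ log (1 - l) - S(σ)`. The convex combination
of these two bounds is the claim, because `S(ω) = -(l Tr[ρ log ω] + (1 - l) Tr[σ log ω])`.
-/

open scoped ComplexOrder

/-- The matrix logarithm of a Hermitian matrix, defined by applying the real
logarithm to the eigenvalues via the continuous functional calculus. -/
noncomputable def matLog {d : Type*} [Fintype d] [DecidableEq d]
    (A : Matrix d d ℂ) : Matrix d d ℂ :=
  cfc Real.log A

/-- The von Neumann entropy `S(ρ) = -Tr[ρ log ρ]` of a (Hermitian) matrix. -/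
noncomputable def vnEntropy {d : Type*} [Fintype d] [DecidableEq d]
    (ρ : Matrix d d ℂ) : ℝ :=
  -((ρ * matLog ρ).trace.re)

open scoped Matrix.Norms.L2Operator MatrixOrder in
/-- Operator monotonicity of the logarithm for `l • ρ ≤ ω`, together with
`log (l • ρ) = (log l) • 1 + log ρ`. -/
lemma matLog_add_le {d : Type*} [Fintype d] [DecidableEq d]
    {ρ ω : Matrix d d ℂ} (hρ : ρ.PosDef) {l : ℝ} (hl : 0 < l) (h : (ω - l • ρ).PosSemidef) :
    (matLog ω - (Real.log l • (1 : Matrix d d ℂ) + matLog ρ)).PosSemidef := by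
  have hρ' : IsStrictlyPositive ρ := hρ.isStrictlyPositive
  have hlρ : IsStrictlyPositive (l • ρ) := (hρ.smul hl).isStrictlyPositive
  -- `CFC.log` unfolds to the same `cfc Real.log` as `matLog`, so `h1` closes the goal definitionally.
  have h1 : CFC.log (l • ρ) ≤ CFC.log ω := CFC.log_le_log (Matrix.le_iff.2 h) hlρ
  rw [CFC.log_smul' ρ hl hρ', Matrix.le_iff, Algebra.algebraMap_eq_smul_one] at h1
  exact h1

open scoped MatrixOrder in
lemma trace_mul_re_nonneg {d : Type*} [Fintype d] [DecidableEq d]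
    {A B : Matrix d d ℂ} (hA : A.PosSemidef) (hB : B.PosSemidef) :
    0 ≤ (A * B).trace.re := by
  obtain ⟨C, rfl⟩ := CStarAlgebra.nonneg_iff_eq_star_mul_self.mp hA.nonneg
  rw [Matrix.mul_assoc, Matrix.trace_mul_comm]
  exact (Complex.le_def.1 (hB.mul_mul_conjTranspose_same C).trace_nonneg).1

/-- If `l • ρ ≤ ω`, the cross term `Tr[ρ log ω]` is at least `log l + Tr[ρ log ρ]`. -/
lemma trace_mul_matLog_ge {d : Type*} [Fintype d] [DecidableEq d]
    {ρ ω : Matrix d d ℂ} (hρ : ρ.PosDef) (hρ1 : ρ.trace = 1) {l : ℝ} (hl : 0 < l)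
    (h : (ω - l • ρ).PosSemidef) :
    Real.log l - vnEntropy ρ ≤ (ρ * matLog ω).trace.re := by
  have := trace_mul_re_nonneg hρ.posSemidef (matLog_add_le hρ hl h)
  simp [mul_sub, mul_add, hρ1] at this
  simp only [vnEntropy]
  linarith

/-- For faithful (positive definite) density matrices `ρ, σ` and `λ ∈ (0,1)`,
`S(λρ + (1−λ)σ) ≤ λ S(ρ) + (1−λ) S(σ) + λ log(1/λ) + (1−λ) log(1/(1−λ))`. -/
theorem entropy_mixture_le {d : Type*} [Fintype d] [DecidableEq d]
    (ρ σ : Matrix d d ℂ) (hρ : ρ.PosDef) (hσ : σ.PosDef)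
    (hρ1 : ρ.trace = 1) (hσ1 : σ.trace = 1)
    (l : ℝ) (hl : l ∈ Set.Ioo (0 : ℝ) 1) :
    vnEntropy (l • ρ + (1 - l) • σ) ≤
      l * vnEntropy ρ + (1 - l) * vnEntropy σ
        + l * Real.log (1 / l) + (1 - l) * Real.log (1 / (1 - l)) := by
  have h0 : 0 < l := hl.1
  have h1 : 0 < 1 - l := sub_pos.2 hl.2
  have e1 := trace_mul_matLog_ge (ω := l • ρ + (1 - l) • σ) hρ hρ1 h0
    (by simpa using (hσ.smul h1).posSemidef)
  have e2 := trace_mul_matLog_ge (ω := l • ρ + (1 - l) • σ) hσ hσ1 h1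
    (by simpa using (hρ.smul h0).posSemidef)
  have e3 : vnEntropy (l • ρ + (1 - l) • σ) =
      -(l * (ρ * matLog (l • ρ + (1 - l) • σ)).trace.re
        + (1 - l) * (σ * matLog (l • ρ + (1 - l) • σ)).trace.re) := by
    rw [vnEntropy, add_mul, smul_mul_assoc, smul_mul_assoc, Matrix.trace_add, Matrix.trace_smul,
      Matrix.trace_smul, Complex.add_re, Complex.smul_re, Complex.smul_re, smul_eq_mul, smul_eq_mul]
  rw [e3, one_div, one_div, Real.log_inv, Real.log_inv]
  have := mul_le_mul_of_nonneg_left e1 h0.le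
  have := mul_le_mul_of_nonneg_left e2 h1.le
  linarith
end

section
/- Let A and B be positive definite Hermitian matrices on a finite-dimensional complex Hilbert space with A ≤ B in the Loewner order (i.e., B − A is positive semidefinite). Then log A ≤ log B in the Loewner order, where log is applied via the functional calculus. Equivalently, −log is operator monotone decreasing: A ≤ B implies −log B ≤ −log A. -/
/-! Complex matrices with the L2 operator norm and the Loewner order form a C⋆-algebra in which
strictly positive elements are the positive definite matrices, so the theorem is an instance of
the operator monotonicity of the logarithm in C⋆-algebras, `CFC.log_le_log`. That result comes
from `log x = lim_{p → 0⁺} (x ^ p - 1) / p` and the operator monotonicity of `x ^ p` for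
`0 < p < 1`. -/

open scoped ComplexOrder

open scoped Matrix.Norms.L2Operator MatrixOrder in
/-- The Loewner-order form of the theorem. `matLog` does not mention a norm, so the L2 operator
norm, which makes the matrices a C⋆-algebra, can stay local to this lemma. -/
lemma matLog_le_matLog {d : Type*} [Fintype d] [DecidableEq d]
    {A B : Matrix d d ℂ} (hA : A.PosDef) (hAB : A ≤ B) : matLog A ≤ matLog B :=
  CFC.log_le_log hAB hA.isStrictlyPositive

/-- The logarithm is operator monotone: if `A ≤ B` in the Loewner order
(i.e. `B − A` is positive semidefinite) for positive definite Hermitian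
matrices `A, B`, then `log A ≤ log B` in the Loewner order. -/
theorem matLog_monotone {d : Type*} [Fintype d] [DecidableEq d]
    (A B : Matrix d d ℂ) (hA : A.PosDef) (hB : B.PosDef)
    (hAB : (B - A).PosSemidef) :
    (matLog B - matLog A).PosSemidef := by
  exact Matrix.le_iff.mp (matLog_le_matLog hA (Matrix.le_iff.mpr hAB))
end

section
/- Let H be a complex Hilbert space, let R be a positive (hence self-adjoint) bounded operator on H, and let V be a self-adjoint bounded operator on H. Then ‖R^{1/2} V R^{1/2}‖ ≤ ‖R V‖, where R^{1/2} is the positive square root of R and ‖·‖ denotes the operator norm. -/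
/-!
With `S = R^{1/2}`, the operator `S V S` is self-adjoint, so its norm equals its spectral radius.
The products `(S V) S` and `S (S V) = R V` have the same nonzero spectrum
(`spectrum.nonzero_mul_comm`), hence the same spectral radius, and the spectral radius of `R V`
is at most `‖R V‖`.
-/

/-- For a positive bounded operator `R` and a self-adjoint bounded operator `V` on a
complex Hilbert space, `‖R^{1/2} V R^{1/2}‖ ≤ ‖R V‖`, where `R^{1/2}` is the positive
square root of `R`. -/
theorem norm_sqrt_mul_mul_sqrt_le {H : Type*} [NormedAddCommGroup H]
    [InnerProductSpace ℂ H] [CompleteSpace H]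
    (R V : H →L[ℂ] H) (hR : 0 ≤ R) (hV : IsSelfAdjoint V) :
    ‖CFC.sqrt R * V * CFC.sqrt R‖ ≤ ‖R * V‖ := by
  -- The norm bounds the spectrum only when `‖1‖ = 1`, which requires `H` to be nontrivial.
  rcases subsingleton_or_nontrivial H with _ | _
  · rw [Subsingleton.elim (CFC.sqrt R * V * CFC.sqrt R) (R * V)]
  have hS : IsSelfAdjoint (CFC.sqrt R) := IsSelfAdjoint.of_nonneg (CFC.sqrt_nonneg R)
  have hSVS : IsSelfAdjoint (CFC.sqrt R * V * CFC.sqrt R) := hV.conjugate_self hS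
  have hRV : CFC.sqrt R * (CFC.sqrt R * V) = R * V := by
    rw [← mul_assoc, CFC.sqrt_mul_sqrt_self R hR]
  have h : spectralRadius ℂ (CFC.sqrt R * V * CFC.sqrt R) ≤ (‖R * V‖₊ : ENNReal) := by
    refine iSup₂_le fun k hk => ?_
    by_cases hk0 : k = 0
    · simp [hk0]
    · have hmem : k ∈ spectrum ℂ (CFC.sqrt R * V * CFC.sqrt R) \ {0} := ⟨hk, hk0⟩
      rw [spectrum.nonzero_mul_comm, hRV] at hmem
      exact_mod_cast spectrum.norm_le_norm_of_mem hmem.1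
  rw [hSVS.spectralRadius_eq_nnnorm] at h
  exact_mod_cast h
end
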